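/- For each positive integer n, the sum over all binary trees T with n vertices of f^T · ∏_{v ∈ T} 1/2^{h_v - 1} equals 1, where f^T is the number of increasing labelings of T and h_v is the hook length of v. -/

import Mathlib

/-- A binary tree: `nil` is the empty tree, and a vertex may have an empty or
nonempty left subtree and an empty or nonempty right subtree.  The binary
trees with `n` vertices are the `T : BinTree` with `T.size = n`. -/
inductive BinTree : Type where
  | nil : BinTree
  | node (l r : BinTree) : BinTree
deriving DecidableEq

/-- The number of vertices of a binary tree. -/
def BinTree.size : BinTree → ℕ
  | .nil => 0
  | .node l r => l.size + r.size + 1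

/-- The product, over all vertices `v` of a binary tree, of `f h_v`, where
`h_v` is the hook length of `v` (the number of descendants of `v`, including
`v` itself). -/
def BinTree.hookProd (f : ℕ → ℝ) : BinTree → ℝ
  | .nil => 1
  | .node l r => f (l.size + r.size + 1) * l.hookProd f * r.hookProd f

/-- The vertices of a binary tree, encoded as paths from the root
(`false` = go to left child, `true` = go to right child). -/
def BinTree.positions : BinTree → List (List Bool)
  | .nil => []
  | .node l r =>
      [] :: (l.positions.map (fun p => false :: p) ++ r.positions.map (fun p => true :: p))

/-- The number `f^T` of increasing labelings of a binary tree `T`: bijections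
`ℓ` from the vertices of `T` to `{1, …, |T|}` (here `Fin T.size`) such that
`ℓ v < ℓ w` whenever `w` is a child of `v`. -/
noncomputable def BinTree.incLabelings (T : BinTree) : ℕ :=
  Nat.card {ℓ : {p // p ∈ T.positions} → Fin T.size //
    Function.Bijective ℓ ∧
    ∀ v w : {p // p ∈ T.positions}, (∃ b, (w : List Bool) = (v : List Bool) ++ [b]) → ℓ v < ℓ w}

/-!
An increasing labeling of `T` is a linear extension of the poset of vertices of `T`, ordered by
descent from the root. For a tree with root subtrees `l` and `r` this poset is the disjoint union
of those of `l` and `r` with a new least element, so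
`f^T = (|l| + |r|).choose |l| * f^l * f^r`. Summing over all trees, the numbers
`a n = ∑_{T ∈ B(n)} f^T ∏_v ρ(h_v)` satisfy
`a (n + 1) = ρ (n + 1) * ∑_{i + j = n} n.choose i * a i * a j`, and for `ρ h = 1 / 2 ^ (h - 1)` the
binomial theorem shows that the constant sequence `1` solves this recurrence.
-/

open Finset.HasAntidiagonal

/-- The strictly monotone bijections from the poset `P` onto `α`. If `α` is linearly ordered, these
are the linear extensions of `P` written with the labels in `α`. -/
def IncreasingBijection (P α : Type*) [PartialOrder P] [Preorder α] : Type _ :=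
  {f : P → α // Function.Bijective f ∧ StrictMono f}

/-- The number of linear extensions of a finite poset `P`. -/
noncomputable def linearExtensionCount (P : Type*) [PartialOrder P] : ℕ :=
  Nat.card (IncreasingBijection P (Fin (Nat.card P)))

namespace IncreasingBijection

variable {P Q α β : Type*} [PartialOrder P] [PartialOrder Q]

instance [Preorder α] [Finite P] [Finite α] : Finite (IncreasingBijection P α) :=
  Subtype.finite

/-- Increasing bijections transported along order isomorphisms of source and target. -/
def congr [Preorder α] [Preorder β] (e : P ≃o Q) (e' : α ≃o β) :
    IncreasingBijection P α ≃ IncreasingBijection Q β where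
  toFun f := ⟨e' ∘ f.1 ∘ e.symm, e'.bijective.comp (f.2.1.comp e.symm.bijective),
    e'.strictMono.comp (f.2.2.comp e.symm.strictMono)⟩
  invFun f := ⟨e'.symm ∘ f.1 ∘ e, e'.symm.bijective.comp (f.2.1.comp e.bijective),
    e'.symm.strictMono.comp (f.2.2.comp e.strictMono)⟩
  left_inv f := Subtype.ext (by ext; simp)
  right_inv f := Subtype.ext (by ext; simp)

theorem card_eq_linearExtensionCount [LinearOrder α] [Finite α]
    (h : Nat.card α = Nat.card P) :
    Nat.card (IncreasingBijection P α) = linearExtensionCount P := by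
  have := Fintype.ofFinite α
  exact Nat.card_congr (congr (.refl P)
    (Fintype.orderIsoFinOfCardEq α (Nat.card_eq_fintype_card.symm.trans h)).symm)

theorem card_eq_zero [Preorder α] (h : Nat.card α ≠ Nat.card P) :
    Nat.card (IncreasingBijection P α) = 0 := by
  have : IsEmpty (IncreasingBijection P α) :=
    ⟨fun f => h (Nat.card_congr (Equiv.ofBijective f.1 f.2.1)).symm⟩
  exact Nat.card_of_isEmpty

theorem map_bot [OrderBot P] [PartialOrder α] [OrderBot α] (f : IncreasingBijection P α) :
    f.1 ⊥ = ⊥ := by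
  obtain ⟨p, hp⟩ := f.2.1.surjective ⊥
  exact le_bot_iff.1 (hp ▸ f.2.2.monotone bot_le)

/-- Extends an increasing bijection by sending a new least element to a new least element. -/
def withBotMap [Preorder α] (f : IncreasingBijection P α) :
    IncreasingBijection (WithBot P) (WithBot α) :=
  ⟨WithBot.map f.1, (Equiv.optionCongr (Equiv.ofBijective f.1 f.2.1)).bijective,
    f.2.2.withBot_map⟩

theorem withBotMap_injective [Preorder α] :
    Function.Injective (withBotMap : IncreasingBijection P α → _) := fun _ _ h =>
  Subtype.ext (Option.map_injective' (congrArg Subtype.val h))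

theorem withBotMap_surjective [PartialOrder α] :
    Function.Surjective (withBotMap : IncreasingBijection P α → _) := by
  intro f
  have apply_coe_ne_bot (p : P) : f.1 p ≠ ⊥ := fun h =>
    WithBot.coe_ne_bot (f.2.1.injective (h.trans f.map_bot.symm))
  choose g hg using fun p => WithBot.ne_bot_iff_exists.1 (apply_coe_ne_bot p)
  have g_injective : Function.Injective g := fun p q h =>
    WithBot.coe_injective (f.2.1.injective (by rw [← hg, ← hg, h]))
  have g_surjective : Function.Surjective g := by
    intro a
    obtain ⟨p, hp⟩ := f.2.1.surjective a
    cases p with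
    | bot => exact absurd (hp.symm.trans f.map_bot) WithBot.coe_ne_bot
    | coe p => exact ⟨p, WithBot.coe_injective ((hg p).trans hp)⟩
  have g_strictMono : StrictMono g := fun p q h =>
    WithBot.coe_lt_coe.1 (by simpa only [hg] using f.2.2 (WithBot.coe_lt_coe.2 h))
  refine ⟨⟨g, ⟨g_injective, g_surjective⟩, g_strictMono⟩, Subtype.ext (funext fun p => ?_)⟩
  cases p with
  | bot => exact f.map_bot.symm
  | coe p => exact hg p

section Sum

variable [Preorder α] [DecidableEq α]

/-- Glues increasing bijections onto complementary sets of labels. -/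
def glue (A : Finset α) (f : IncreasingBijection P {a // a ∈ A})
    (g : IncreasingBijection Q {a // a ∉ A}) : IncreasingBijection (P ⊕ Q) α :=
  ⟨Equiv.sumCompl (· ∈ A) ∘ Sum.map f.1 g.1,
    (Equiv.sumCompl (· ∈ A)).bijective.comp (Sum.map_bijective.2 ⟨f.2.1, g.2.1⟩), by
    rintro _ _ (⟨h⟩ | ⟨h⟩)
    exacts [f.2.2 h, g.2.2 h]⟩

theorem range_glue_inl (A : Finset α) (f : IncreasingBijection P {a // a ∈ A})
    (g : IncreasingBijection Q {a // a ∉ A}) :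
    Set.range (fun p => (glue A f g).1 (.inl p)) = A := by
  change Set.range (Subtype.val ∘ f.1) = A
  rw [f.2.1.surjective.range_comp, Subtype.range_coe_subtype]
  rfl

theorem glue_injective :
    Function.Injective fun x : Σ A : Finset α,
        IncreasingBijection P {a // a ∈ A} × IncreasingBijection Q {a // a ∉ A} =>
      glue x.1 x.2.1 x.2.2 := by
  rintro ⟨A, f, g⟩ ⟨B, f', g'⟩ (h : glue A f g = glue B f' g')
  obtain rfl : A = B := by
    rw [← Finset.coe_inj, ← range_glue_inl A f g, h, range_glue_inl]
  have h_apply (x : P ⊕ Q) : (glue A f g).1 x = (glue A f' g').1 x := by rw [h]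
  have hf : f = f' := Subtype.ext (funext fun p => Subtype.ext (h_apply (.inl p)))
  have hg : g = g' := Subtype.ext (funext fun q => Subtype.ext (h_apply (.inr q)))
  rw [hf, hg]

theorem glue_surjective [Finite P] :
    Function.Surjective fun x : Σ A : Finset α,
        IncreasingBijection P {a // a ∈ A} × IncreasingBijection Q {a // a ∉ A} =>
      glue x.1 x.2.1 x.2.2 := by
  intro f
  obtain ⟨A, hA⟩ := (Set.finite_range fun p => f.1 (.inl p)).exists_finset
  have inl_mem (p : P) : f.1 (.inl p) ∈ A := (hA _).2 ⟨p, rfl⟩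
  have inr_notMem (q : Q) : f.1 (.inr q) ∉ A := fun h => by
    obtain ⟨p, hp⟩ := (hA _).1 h
    exact Sum.inl_ne_inr (f.2.1.injective hp)
  have inl_surjective : Function.Surjective fun p => (⟨f.1 (.inl p), inl_mem p⟩ : {a // a ∈ A}) :=
    fun a => by
      obtain ⟨p, hp⟩ := (hA _).1 a.2
      exact ⟨p, Subtype.ext hp⟩
  have inr_surjective :
      Function.Surjective fun q => (⟨f.1 (.inr q), inr_notMem q⟩ : {a // a ∉ A}) := fun a => by
    obtain ⟨p | q, h⟩ := f.2.1.surjective a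
    exacts [absurd (h ▸ inl_mem p) a.2, ⟨q, Subtype.ext h⟩]
  refine ⟨⟨A,
    ⟨_, ⟨fun p q h => Sum.inl_injective (f.2.1.injective (congrArg Subtype.val h)),
      inl_surjective⟩, fun p q h => f.2.2 (Sum.inl_lt_inl_iff.2 h)⟩,
    ⟨_, ⟨fun p q h => Sum.inr_injective (f.2.1.injective (congrArg Subtype.val h)),
      inr_surjective⟩, fun p q h => f.2.2 (Sum.inr_lt_inr_iff.2 h)⟩⟩, ?_⟩
  exact Subtype.ext (funext (by rintro (p | q) <;> rfl))

end Sum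

end IncreasingBijection

section LinearExtensionCount

variable {P Q : Type*} [PartialOrder P] [PartialOrder Q]

theorem linearExtensionCount_congr (e : P ≃o Q) :
    linearExtensionCount P = linearExtensionCount Q := by
  rw [linearExtensionCount, Nat.card_congr e.toEquiv]
  exact Nat.card_congr (IncreasingBijection.congr e (.refl _))

theorem linearExtensionCount_of_isEmpty [IsEmpty P] : linearExtensionCount P = 1 := by
  have : IsEmpty (Fin (Nat.card P)) := by
    rw [Nat.card_of_isEmpty]
    infer_instance
  exact Nat.card_eq_one_iff_unique.2 ⟨⟨fun _ _ => Subtype.ext (Subsingleton.elim _ _)⟩,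
    ⟨isEmptyElim, ⟨isEmptyElim, isEmptyElim⟩, isEmptyElim⟩⟩

theorem linearExtensionCount_withBot [Finite P] :
    linearExtensionCount (WithBot P) = linearExtensionCount P := by
  have card_withBot_fin : Nat.card (WithBot (Fin (Nat.card P))) = Nat.card (WithBot P) :=
    (Nat.card_congr (Finite.equivFin P).optionCongr).symm
  have : Finite (WithBot (Fin (Nat.card P))) := inferInstanceAs (Finite (Option _))
  rw [← IncreasingBijection.card_eq_linearExtensionCount card_withBot_fin]
  exact (Nat.card_eq_of_bijective _ ⟨IncreasingBijection.withBotMap_injective,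
    IncreasingBijection.withBotMap_surjective⟩).symm

theorem card_increasingBijection_mul_card_compl {α : Type*} [LinearOrder α] [Finite α]
    (hα : Nat.card α = Nat.card P + Nat.card Q) (A : Finset α) :
    Nat.card (IncreasingBijection P {a // a ∈ A}) * Nat.card (IncreasingBijection Q {a // a ∉ A}) =
      if A.card = Nat.card P then linearExtensionCount P * linearExtensionCount Q else 0 := by
  have card_mem : Nat.card {a // a ∈ A} = A.card := by simp
  split_ifs with hA
  · have card_notMem : Nat.card {a // a ∉ A} = Nat.card Q := by
      have := Fintype.ofFinite α
      rw [Nat.card_eq_fintype_card] at hα ⊢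
      rw [Fintype.card_subtype_compl, Fintype.card_coe, hα, hA, Nat.add_sub_cancel_left]
    rw [IncreasingBijection.card_eq_linearExtensionCount (card_mem.trans hA),
      IncreasingBijection.card_eq_linearExtensionCount card_notMem]
  · rw [IncreasingBijection.card_eq_zero (card_mem.trans_ne hA), zero_mul]

theorem linearExtensionCount_sum [Finite P] [Finite Q] :
    linearExtensionCount (P ⊕ Q) = (Nat.card P + Nat.card Q).choose (Nat.card P) *
      (linearExtensionCount P * linearExtensionCount Q) := by
  rw [linearExtensionCount, ← Nat.card_eq_of_bijective _
    ⟨IncreasingBijection.glue_injective, IncreasingBijection.glue_surjective⟩, Nat.card_sigma]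
  have card_labels : Nat.card (Fin (Nat.card (P ⊕ Q))) = Nat.card P + Nat.card Q := by
    rw [Nat.card_fin, Nat.card_sum]
  simp_rw [Nat.card_prod, card_increasingBijection_mul_card_compl card_labels]
  rw [← Finset.sum_filter, Finset.sum_const, Finset.univ_filter_card_eq, Finset.card_powersetCard,
    Finset.card_fin, Nat.card_sum, smul_eq_mul]

end LinearExtensionCount

theorem sum_antidiagonal_choose (n : ℕ) :
    ∑ ij ∈ antidiagonal n, n.choose ij.1 = 2 ^ n := by
  rw [Finset.Nat.sum_antidiagonal_eq_sum_range_succ fun i _ => n.choose i, Nat.sum_range_choose]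

namespace BinTree

/-- The vertices of `T`, ordered by descent: `v ≤ w` if the path from the root to `v` is an
initial segment of the path to `w`. -/
def Vertex (T : BinTree) : Type :=
  {p // p ∈ T.positions}

instance (T : BinTree) : PartialOrder T.Vertex where
  le v w := v.1 <+: w.1
  le_refl v := List.prefix_refl v.1
  le_trans _ _ _ := List.IsPrefix.trans
  le_antisymm _ _ h h' := Subtype.ext (antisymm h h')

instance (T : BinTree) : Finite T.Vertex :=
  (List.finite_toSet T.positions).to_subtype

instance : IsEmpty nil.Vertex :=
  ⟨fun v => List.not_mem_nil v.2⟩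

theorem vertex_le_def {T : BinTree} {v w : T.Vertex} : v ≤ w ↔ v.1 <+: w.1 :=
  Iff.rfl

section Node

variable (l r : BinTree)

/-- The inclusion of the root (as `⊥`) and of the vertices of the two root subtrees into the
vertices of `node l r`. -/
def toVertexNode : WithBot (l.Vertex ⊕ r.Vertex) → (node l r).Vertex
  | ⊥ => ⟨[], by simp [positions]⟩
  | (Sum.inl v : l.Vertex ⊕ r.Vertex) => ⟨false :: v.1, by simp [positions, v.2]⟩
  | (Sum.inr v : l.Vertex ⊕ r.Vertex) => ⟨true :: v.1, by simp [positions, v.2]⟩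

theorem toVertexNode_le_toVertexNode_iff (v w : WithBot (l.Vertex ⊕ r.Vertex)) :
    toVertexNode l r v ≤ toVertexNode l r w ↔ v ≤ w := by
  rw [vertex_le_def]
  cases v with
  | bot => simp [toVertexNode]
  | coe v =>
    cases w with
    | bot => rcases v with v | v <;> simp [toVertexNode]
    | coe w =>
      rcases v with v | v <;> rcases w with w | w <;>
        simp [toVertexNode, vertex_le_def]

theorem toVertexNode_surjective : Function.Surjective (toVertexNode l r) := by
  rintro ⟨p, hp⟩
  have hp' := hp
  simp only [positions, List.mem_cons, List.mem_append, List.mem_map] at hp'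
  obtain rfl | ⟨p, hl, rfl⟩ | ⟨p, hr, rfl⟩ := hp'
  exacts [⟨⊥, rfl⟩, ⟨(Sum.inl ⟨p, hl⟩ : l.Vertex ⊕ r.Vertex), rfl⟩,
    ⟨(Sum.inr ⟨p, hr⟩ : l.Vertex ⊕ r.Vertex), rfl⟩]

/-- The poset of vertices of `node l r` is the disjoint union of those of `l` and `r` with the
root as new least element. -/
noncomputable def vertexNodeOrderIso : WithBot (l.Vertex ⊕ r.Vertex) ≃o (node l r).Vertex :=
  RelIso.ofSurjective
    (OrderEmbedding.ofMapLEIff (toVertexNode l r) (toVertexNode_le_toVertexNode_iff l r))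
    (toVertexNode_surjective l r)

end Node

theorem card_vertex (T : BinTree) : Nat.card T.Vertex = T.size := by
  induction T with
  | nil => exact Nat.card_of_isEmpty
  | node l r ihl ihr =>
    calc Nat.card (node l r).Vertex
      _ = Nat.card (Option (l.Vertex ⊕ r.Vertex)) :=
        (Nat.card_congr (vertexNodeOrderIso l r).toEquiv).symm
      _ = l.size + r.size + 1 := by rw [Finite.card_option, Nat.card_sum, ihl, ihr]

theorem mem_positions_of_prefix {T : BinTree} {p q : List Bool} (hpq : p <+: q)
    (hq : q ∈ T.positions) : p ∈ T.positions := by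
  induction T generalizing p q with
  | nil => exact absurd hq List.not_mem_nil
  | node l r ihl ihr =>
    rcases p with _ | ⟨b, p⟩
    · simp [positions]
    obtain ⟨s, rfl⟩ := hpq
    cases b
    · have : p ++ s ∈ l.positions := by simpa [positions] using hq
      simpa [positions] using ihl (List.prefix_append p s) this
    · have : p ++ s ∈ r.positions := by simpa [positions] using hq
      simpa [positions] using ihr (List.prefix_append p s) this

theorem strictMono_vertex_iff {T : BinTree} {α : Type*} [Preorder α] {f : T.Vertex → α} :
    StrictMono f ↔ ∀ v w : T.Vertex, (∃ b, w.1 = v.1 ++ [b]) → f v < f w := by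
  constructor
  · rintro hf v w ⟨b, hb⟩
    refine hf (lt_of_le_of_ne ⟨[b], hb.symm⟩ fun h => ?_)
    simp [h] at hb
  · intro hf v w hvw
    have lt_of_descendant (s : List Bool) (b : Bool) (h : v.1 ++ s ++ [b] ∈ T.positions) :
        f v < f ⟨v.1 ++ s ++ [b], h⟩ := by
      induction s using List.reverseRecOn generalizing b with
      | nil => exact hf _ _ ⟨b, by simp⟩
      | append_singleton s c ih =>
        have h_parent : v.1 ++ s ++ [c] ∈ T.positions :=
          mem_positions_of_prefix ⟨[b], by simp⟩ h
        exact (ih c h_parent).trans (hf ⟨_, h_parent⟩ _ ⟨b, by simp⟩)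
    obtain ⟨w, hw⟩ := w
    obtain ⟨s, rfl⟩ : v.1 <+: w := hvw.le
    rcases List.eq_nil_or_concat s with rfl | ⟨s, b, rfl⟩
    · exact absurd (Subtype.ext (List.append_nil v.1).symm) hvw.ne
    · simpa using lt_of_descendant s b (by simpa using hw)

theorem incLabelings_eq_linearExtensionCount (T : BinTree) :
    T.incLabelings = linearExtensionCount T.Vertex := by
  rw [linearExtensionCount, card_vertex]
  exact Nat.card_congr
    (Equiv.subtypeEquivRight fun _ => and_congr_right' strictMono_vertex_iff.symm)

theorem incLabelings_nil : nil.incLabelings = 1 := by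
  rw [incLabelings_eq_linearExtensionCount, linearExtensionCount_of_isEmpty]

theorem incLabelings_node (l r : BinTree) :
    (node l r).incLabelings =
      (l.size + r.size).choose l.size * (l.incLabelings * r.incLabelings) := by
  simp only [incLabelings_eq_linearExtensionCount]
  rw [← linearExtensionCount_congr (vertexNodeOrderIso l r), linearExtensionCount_withBot,
    linearExtensionCount_sum, card_vertex, card_vertex]

instance : Unique {T : BinTree // T.size = 0} where
  default := ⟨nil, rfl⟩
  uniq := by
    rintro ⟨_ | _, h⟩
    · rfl
    · exact absurd h (Nat.succ_ne_zero _)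

/-- Decomposition of a tree with `n + 1` vertices into its two root subtrees. -/
def rootEquiv (n : ℕ) :
    {T : BinTree // T.size = n + 1} ≃
      Σ ij : antidiagonal n,
        {T : BinTree // T.size = ij.1.1} × {T : BinTree // T.size = ij.1.2} where
  toFun
    | ⟨node l r, h⟩ =>
      ⟨⟨(l.size, r.size), mem_antidiagonal.2 (Nat.succ_injective h)⟩, ⟨l, rfl⟩, ⟨r, rfl⟩⟩
  invFun x := ⟨node x.2.1 x.2.2, by
    rw [size, x.2.1.2, x.2.2.2, mem_antidiagonal.1 x.1.2]⟩
  left_inv := by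
    rintro ⟨_ | ⟨l, r⟩, h⟩
    · exact absurd h.symm (Nat.succ_ne_zero n)
    · rfl
  right_inv := by
    rintro ⟨⟨⟨i, j⟩, hij⟩, ⟨l, hl : l.size = i⟩, ⟨r, hr : r.size = j⟩⟩
    subst hl hr
    rfl

instance finite_size_eq (n : ℕ) : Finite {T : BinTree // T.size = n} := by
  induction n using Nat.strong_induction_on with
  | _ n ih =>
    cases n with
    | zero => infer_instance
    | succ n =>
      have (ij : antidiagonal n) : Finite {T : BinTree // T.size = ij.1.1} :=
        ih _ (Nat.lt_succ_of_le (antidiagonal.fst_le ij.2))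
      have (ij : antidiagonal n) : Finite {T : BinTree // T.size = ij.1.2} :=
        ih _ (Nat.lt_succ_of_le (antidiagonal.snd_le ij.2))
      exact Finite.of_equiv _ (rootEquiv n).symm

theorem tsum_size_eq_succ {M : Type*} [AddCommMonoid M] [TopologicalSpace M] (F : BinTree → M)
    (n : ℕ) :
    ∑' T : {T : BinTree // T.size = n + 1}, F T =
      ∑ ij ∈ antidiagonal n, ∑' (l : {T : BinTree // T.size = ij.1})
        (r : {T : BinTree // T.size = ij.2}), F (node l r) := by
  have (k : ℕ) : Fintype {T : BinTree // T.size = k} := Fintype.ofFinite _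
  rw [← Finset.sum_coe_sort (antidiagonal n), ← (rootEquiv n).symm.tsum_eq, tsum_fintype,
    Fintype.sum_sigma]
  simp only [Fintype.sum_prod_type, tsum_fintype]
  rfl

/-- The sum of `f^T ∏_{v ∈ T} ρ(h_v)` over all binary trees `T` with `n` vertices. -/
noncomputable def hookSum (ρ : ℕ → ℝ) (n : ℕ) : ℝ :=
  ∑' T : {T : BinTree // T.size = n}, ((T : BinTree).incLabelings : ℝ) * (T : BinTree).hookProd ρ

theorem hookSum_zero (ρ : ℕ → ℝ) : hookSum ρ 0 = 1 := by
  rw [hookSum, tsum_fintype, Fintype.sum_unique]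
  change (nil.incLabelings : ℝ) * 1 = 1
  rw [incLabelings_nil, Nat.cast_one, one_mul]

theorem hookSum_succ (ρ : ℕ → ℝ) (n : ℕ) :
    hookSum ρ (n + 1) =
      ρ (n + 1) * ∑ ij ∈ antidiagonal n,
        n.choose ij.1 * (hookSum ρ ij.1 * hookSum ρ ij.2) := by
  have node_weight (l r : BinTree) (h : l.size + r.size = n) :
      ((node l r).incLabelings : ℝ) * (node l r).hookProd ρ =
        ρ (n + 1) * n.choose l.size *
          ((l.incLabelings * l.hookProd ρ) * (r.incLabelings * r.hookProd ρ)) := by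
    rw [incLabelings_node, hookProd, h]
    push_cast
    ring
  rw [hookSum, tsum_size_eq_succ fun T => (T.incLabelings : ℝ) * T.hookProd ρ, Finset.mul_sum]
  refine Finset.sum_congr rfl fun ij hij => ?_
  rw [← mul_assoc, hookSum, hookSum, ← tsum_mul_right, ← tsum_mul_left]
  refine tsum_congr fun l => ?_
  rw [← tsum_mul_left, ← tsum_mul_left]
  refine tsum_congr fun r => ?_
  rw [node_weight l r (by rw [l.2, r.2, mem_antidiagonal.1 hij]), l.2]

theorem hookSum_succ_of_forall_le_eq_one {ρ : ℕ → ℝ} {n : ℕ} (h : ∀ k ≤ n, hookSum ρ k = 1) :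
    hookSum ρ (n + 1) = ρ (n + 1) * 2 ^ n := by
  have sum_eq : ∑ ij ∈ antidiagonal n, (n.choose ij.1 : ℝ) * (hookSum ρ ij.1 * hookSum ρ ij.2) =
      ∑ ij ∈ antidiagonal n, (n.choose ij.1 : ℝ) :=
    Finset.sum_congr rfl fun ij hij => by
      rw [h _ (antidiagonal.fst_le hij), h _ (antidiagonal.snd_le hij),
        one_mul, mul_one]
  rw [hookSum_succ, sum_eq, ← Nat.cast_sum, sum_antidiagonal_choose, Nat.cast_pow, Nat.cast_ofNat]

end BinTree

/-- For every positive integer `n`,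
`∑_{T ∈ B(n)} f^T ∏_{v ∈ T} 1/2^{h_v-1} = 1`. -/
theorem han_formula_rewritten (n : ℕ) (hn : 0 < n) :
    ∑' T : {T : BinTree // T.size = n},
      ((T : BinTree).incLabelings : ℝ) *
        (T : BinTree).hookProd (fun h => 1 / (2 : ℝ) ^ (h - 1)) = 1 := by
  change BinTree.hookSum (fun h => 1 / 2 ^ (h - 1)) n = 1
  clear hn
  induction n using Nat.strong_induction_on with
  | _ n ih =>
    cases n with
    | zero => exact BinTree.hookSum_zero _
    | succ n =>
      rw [BinTree.hookSum_succ_of_forall_le_eq_one fun k hk => ih k (Nat.lt_succ_of_le hk),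
        Nat.add_sub_cancel]
      exact one_div_mul_cancel (pow_ne_zero n two_ne_zero)
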